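/- arXiv:2307.13916 — 6 statements merged into one kernel-verified Lean document; each statement's English description precedes it below -/
import Mathlib

section
/- Let θ*_0, θ*_1, θ̂_0, θ̂_1, x̃ ∈ ℝ^d with ‖θ*_a‖₂ ≤ R_θ for a ∈ {0,1} and ‖x̃‖₂ ≤ 1, and let p₀ ∈ (0, 1/2]. Let a* ∈ argmax_{a∈{0,1}} ⟨θ*_a, x̃⟩ and ã ∈ argmax_{a∈{0,1}} ⟨θ̂_a, x̃⟩. Then ⟨θ*_{a*}, x̃⟩ − [(1−p₀)·⟨θ*_{ã}, x̃⟩ + p₀·⟨θ*_{1−ã}, x̃⟩] ≤ 2·p₀·R_θ + 2·max_{a∈{0,1}} ‖θ̂_a − θ*_a‖₂. -/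
open RealInnerProductSpace

section

variable {E : Type*} [NormedAddCommGroup E] [InnerProductSpace ℝ E] {x : E}

theorem real_inner_le_norm_of_norm_le_one (v : E) (hx : ‖x‖ ≤ 1) : ⟪v, x⟫ ≤ ‖v‖ :=
  (real_inner_le_norm v x).trans (mul_le_of_le_one_right (norm_nonneg v) hx)

theorem real_inner_sub_inner_le_norm_add_norm (u v : E) (hx : ‖x‖ ≤ 1) :
    ⟪u, x⟫ - ⟪v, x⟫ ≤ ‖u‖ + ‖v‖ :=
  calc
    ⟪u, x⟫ - ⟪v, x⟫ = ⟪u - v, x⟫ := (inner_sub_left u v x).symm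
    _ ≤ ‖u - v‖ := real_inner_le_norm_of_norm_le_one _ hx
    _ ≤ ‖u‖ + ‖v‖ := norm_sub_le u v

theorem real_inner_sub_inner_le_of_inner_le_inner {u v u' v' : E} (hx : ‖x‖ ≤ 1)
    (h : ⟪u', x⟫ ≤ ⟪v', x⟫) : ⟪u, x⟫ - ⟪v, x⟫ ≤ ‖u' - u‖ + ‖v' - v‖ :=
  calc
    ⟪u, x⟫ - ⟪v, x⟫ ≤ (⟪v', x⟫ - ⟪v, x⟫) - (⟪u', x⟫ - ⟪u, x⟫) := by linarith
    _ = ⟪v' - v, x⟫ - ⟪u' - u, x⟫ := by simp only [inner_sub_left]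
    _ ≤ ‖v' - v‖ + ‖u' - u‖ := real_inner_sub_inner_le_norm_add_norm _ _ hx
    _ = ‖u' - u‖ + ‖v' - v‖ := add_comm _ _

theorem stmt3_general {ι : Type*} {θs θh : ι → E} {R ε p : ℝ} {greedy : ι}
    (hθ : ∀ a, ‖θs a‖ ≤ R) (hε : ∀ a, ‖θh a - θs a‖ ≤ ε) (hx : ‖x‖ ≤ 1) (hp : 0 ≤ p)
    (hgreedy : ∀ a, ⟪θh a, x⟫ ≤ ⟪θh greedy, x⟫) (comparator explore : ι) :
    ⟪θs comparator, x⟫ - ((1 - p) * ⟪θs greedy, x⟫ + p * ⟪θs explore, x⟫)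
      ≤ 2 * p * R + 2 * ε := by
  have exploitation_gap : ⟪θs comparator, x⟫ - ⟪θs greedy, x⟫ ≤ ε + ε :=
    (real_inner_sub_inner_le_of_inner_le_inner hx (hgreedy comparator)).trans
      (add_le_add (hε comparator) (hε greedy))
  have exploration_gap : ⟪θs greedy, x⟫ - ⟪θs explore, x⟫ ≤ R + R :=
    (real_inner_sub_inner_le_norm_add_norm _ _ hx).trans (add_le_add (hθ greedy) (hθ explore))
  calc
    ⟪θs comparator, x⟫ - ((1 - p) * ⟪θs greedy, x⟫ + p * ⟪θs explore, x⟫)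
      = (⟪θs comparator, x⟫ - ⟪θs greedy, x⟫) + p * (⟪θs greedy, x⟫ - ⟪θs explore, x⟫) := by
        ring
    _ ≤ (ε + ε) + p * (R + R) := by gcongr
    _ = 2 * p * R + 2 * ε := by ring

end

theorem stmt3 (d : ℕ) (hd : 1 ≤ d) (Rθ : ℝ) (hRθ : 0 < Rθ)
    (θs θh : Fin 2 → EuclideanSpace ℝ (Fin d))
    (hθ : ∀ a, ‖θs a‖ ≤ Rθ)
    (xt : EuclideanSpace ℝ (Fin d)) (hx : ‖xt‖ ≤ 1)
    (p₀ : ℝ) (hp : p₀ ∈ Set.Ioc (0:ℝ) (1/2))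
    (astar atil : Fin 2)
    (hastar : ∀ a, ⟪θs a, xt⟫ ≤ ⟪θs astar, xt⟫)
    (hatil : ∀ a, ⟪θh a, xt⟫ ≤ ⟪θh atil, xt⟫) :
    ⟪θs astar, xt⟫ - ((1 - p₀) * ⟪θs atil, xt⟫ + p₀ * ⟪θs (1 - atil), xt⟫)
      ≤ 2 * p₀ * Rθ + 2 * max ‖θh 0 - θs 0‖ ‖θh 1 - θs 1‖ :=
  stmt3_general hθ (Fin.forall_fin_two.2 ⟨le_max_left _ _, le_max_right _ _⟩) hx hp.1.le hatil
    astar (1 - atil)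
end

section
/- Fix integers 0 ≤ T₀ < T, constants R_θ > 0 and ρ ∈ (0,1), and θ*_0, θ*_1 ∈ ℝ^d with ‖θ*_a‖₂ ≤ R_θ. For each t ∈ {1,…,T} let x_t, ε_t ∈ ℝ^d with ‖x_t‖₂ ≤ 1, x̃_t := x_t + ε_t, ‖x̃_t‖₂ ≤ 1, and |⟨θ*_1 − θ*_0, ε_t⟩| ≤ ρ·|⟨θ*_1 − θ*_0, x_t⟩|. Let p₀^{(t)} ∈ (0, 1/2]. For t ≤ T₀ let π_t(0), π_t(1) ≥ p₀^{(t)} be arbitrary with π_t(0)+π_t(1) = 1. For t > T₀ let θ̂_0^{(t−1)}, θ̂_1^{(t−1)} ∈ ℝ^d be arbitrary, let ã_t ∈ argmax_{a∈{0,1}} ⟨θ̂_a^{(t−1)}, x̃_t⟩, and set π_t(ã_t) = 1 − p₀^{(t)}, π_t(1−ã_t) = p₀^{(t)}. Let a*_t ∈ argmax_{a∈{0,1}} ⟨θ*_a, x_t⟩. Then Σ_{t=1}^T [⟨θ*_{a*_t}, x_t⟩ − (π_t(0)·⟨θ*_0, x_t⟩ + π_t(1)·⟨θ*_1, x_t⟩)]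 ≤ 2·T₀·R_θ + (2/(1−ρ))·Σ_{t=T₀+1}^T (p₀^{(t)}·R_θ + max_{a∈{0,1}} ‖θ̂_a^{(t−1)} − θ*_a‖₂). -/
open RealInnerProductSpace Finset

/- The regret of a randomized choice splits, through any reference action `c`, into the gap between
the benchmark and `c` plus the regret against `c`. The latter is at most `2R` times the mass placed
off `c`, which is all that is needed during warm-up. In a greedy round, take for `c` the greedy
action: its empirical advantage at the perturbed context `x + ε` transfers to the true parameters up
to the two estimation errors, and replacing `x + ε` by `x` costs at most `ρ` times the gap itself,
whence the factor `1 / (1 - ρ)`. -/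

theorem sum_Icc_one_eq_add {M : Type*} [AddCommMonoid M] (f : ℕ → M) {m n : ℕ} (hmn : m ≤ n) :
    ∑ i ∈ Icc 1 n, f i = ∑ i ∈ Icc 1 m, f i + ∑ i ∈ Icc (m + 1) n, f i := by
  simpa only [← Icc_add_one_left_eq_Ioc, zero_add] using
    (sum_Ioc_consecutive f m.zero_le hmn).symm

section Regret

variable {ι : Type*} [Fintype ι]

/-- The expected regret, relative to the benchmark action `b`, of drawing an action from the
weights `w` when the action `a` has reward `r a`. -/
def regret (w r : ι → ℝ) (b : ι) : ℝ := r b - ∑ a, w a * r a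

theorem regret_eq_sub_add_regret (w r : ι → ℝ) (b c : ι) :
    regret w r b = (r b - r c) + regret w r c :=
  (sub_add_sub_cancel _ _ _).symm

theorem regret_le_one_sub_mul {w r : ι → ℝ} {R : ℝ} (hw : w ∈ stdSimplex ℝ ι)
    (hr : ∀ a, |r a| ≤ R) (c : ι) : regret w r c ≤ (1 - w c) * (2 * R) := by
  have hshift (a : ι) : 0 ≤ r a + R := by linarith [(abs_le.1 (hr a)).1]
  have hsingle : w c * (r c + R) ≤ ∑ a, w a * (r a + R) :=
    single_le_sum (f := fun a => w a * (r a + R))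
      (fun a _ => mul_nonneg (hw.1 a) (hshift a)) (mem_univ c)
  have hsum : ∑ a, w a * (r a + R) = ∑ a, w a * r a + R := by
    simp only [mul_add, sum_add_distrib, ← sum_mul, hw.2, one_mul]
  have hoff : 0 ≤ 1 - w c := sub_nonneg.2 (mem_Icc_of_mem_stdSimplex hw c).2
  calc regret w r c ≤ (1 - w c) * (r c + R) := by unfold regret; linarith
    _ ≤ (1 - w c) * (2 * R) := by gcongr; linarith [(abs_le.1 (hr c)).2]

theorem regret_le_two_mul {w r : ι → ℝ} {R : ℝ} (hw : w ∈ stdSimplex ℝ ι)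
    (hr : ∀ a, |r a| ≤ R) (b : ι) : regret w r b ≤ 2 * R :=
  (regret_le_one_sub_mul hw hr b).trans <|
    mul_le_of_le_one_left (by linarith [(abs_nonneg _).trans (hr b)]) (by linarith [hw.1 b])

end Regret

section Greedy

variable {E : Type*} [SeminormedAddCommGroup E] [InnerProductSpace ℝ E]

theorem abs_inner_le_of_norm_le_of_norm_le_one {v y : E} {R : ℝ} (hv : ‖v‖ ≤ R) (hy : ‖y‖ ≤ 1) :
    |⟪v, y⟫| ≤ R :=
  (abs_real_inner_le_norm v y).trans
    ((mul_le_of_le_one_right (norm_nonneg v) hy).trans hv)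

theorem one_sub_mul_inner_sub_le_of_misordered {θ θ' η η' x e : E} {ρ : ℝ} (hxe : ‖x + e‖ ≤ 1)
    (he : |⟪θ - θ', e⟫| ≤ ρ * |⟪θ - θ', x⟫|) (hopt : ⟪θ', x⟫ ≤ ⟪θ, x⟫)
    (hest : ⟪η, x + e⟫ ≤ ⟪η', x + e⟫) :
    (1 - ρ) * (⟪θ, x⟫ - ⟪θ', x⟫) ≤ ‖η - θ‖ + ‖η' - θ'‖ := by
  have hnoise : -⟪θ - θ', e⟫ ≤ ρ * (⟪θ, x⟫ - ⟪θ', x⟫) := by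
    rw [inner_sub_left θ θ' x, abs_of_nonneg (sub_nonneg.2 hopt)] at he
    exact (neg_le_abs _).trans he
  have hgap : ⟪θ - θ', x + e⟫ ≤ ‖η - θ‖ + ‖η' - θ'‖ := by
    have hη := abs_le.1 (abs_inner_le_of_norm_le_of_norm_le_one (le_refl ‖η - θ‖) hxe)
    have hη' := abs_le.1 (abs_inner_le_of_norm_le_of_norm_le_one (le_refl ‖η' - θ'‖) hxe)
    rw [inner_sub_left] at hη hη' ⊢
    linarith [hη.1, hη'.2]
  rw [inner_add_right, inner_sub_left θ θ' x] at hgap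
  linarith

variable {ι : Type*} [Fintype ι]

-- The norm of `η - θ : ι → E` is the sup norm, i.e. the largest estimation error of an action.
theorem inner_sub_le_of_misordered {θ η : ι → E} {x e : E} {ρ : ℝ} {b c : ι} (hρ : ρ < 1)
    (hxe : ‖x + e‖ ≤ 1) (he : |⟪θ b - θ c, e⟫| ≤ ρ * |⟪θ b - θ c, x⟫|)
    (hopt : ⟪θ c, x⟫ ≤ ⟪θ b, x⟫) (hest : ⟪η b, x + e⟫ ≤ ⟪η c, x + e⟫) :
    ⟪θ b, x⟫ - ⟪θ c, x⟫ ≤ 2 / (1 - ρ) * ‖η - θ‖ := by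
  have hgap := one_sub_mul_inner_sub_le_of_misordered hxe he hopt hest
  have hb : ‖η b - θ b‖ ≤ ‖η - θ‖ := norm_le_pi_norm (η - θ) b
  have hc : ‖η c - θ c‖ ≤ ‖η - θ‖ := norm_le_pi_norm (η - θ) c
  rw [div_mul_eq_mul_div, le_div_iff₀ (sub_pos.2 hρ)]
  linarith

theorem regret_le_of_clipped_greedy {θ η : ι → E} {x e : E} {w : ι → ℝ} {ρ p R : ℝ} {b c : ι}
    (hρ : ρ ∈ Set.Ico (0 : ℝ) 1) (hθ : ∀ a, ‖θ a‖ ≤ R) (hx : ‖x‖ ≤ 1) (hxe : ‖x + e‖ ≤ 1)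
    (he : |⟪θ b - θ c, e⟫| ≤ ρ * |⟪θ b - θ c, x⟫|) (hopt : ⟪θ c, x⟫ ≤ ⟪θ b, x⟫)
    (hest : ⟪η b, x + e⟫ ≤ ⟪η c, x + e⟫) (hw : w ∈ stdSimplex ℝ ι) (hwc : 1 - p ≤ w c) :
    regret w (fun a => ⟪θ a, x⟫) b ≤ 2 / (1 - ρ) * (p * R + ‖η - θ‖) := by
  have hR : 0 ≤ R := (norm_nonneg _).trans (hθ b)
  have hp : 0 ≤ p := by linarith [(mem_Icc_of_mem_stdSimplex hw c).2]
  have hfactor : 2 ≤ 2 / (1 - ρ) :=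
    le_div_self zero_le_two (sub_pos.2 hρ.2) (sub_le_self 1 hρ.1)
  have hexplore : regret w (fun a => ⟪θ a, x⟫) c ≤ 2 / (1 - ρ) * (p * R) :=
    calc regret w (fun a => ⟪θ a, x⟫) c
        ≤ (1 - w c) * (2 * R) := regret_le_one_sub_mul hw
          (fun a => abs_inner_le_of_norm_le_of_norm_le_one (hθ a) hx) c
      _ ≤ p * (2 * R) := by gcongr; linarith
      _ = 2 * (p * R) := by ring
      _ ≤ 2 / (1 - ρ) * (p * R) := by gcongr
  rw [regret_eq_sub_add_regret _ _ b c, mul_add, add_comm]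
  exact add_le_add hexplore (inner_sub_le_of_misordered hρ.2 hxe he hopt hest)

theorem stmt5_general {T₀ T : ℕ} (hT : T₀ ≤ T) {R ρ : ℝ} (hρ : ρ ∈ Set.Ico (0 : ℝ) 1)
    {θ : ι → E} (hθ : ∀ a, ‖θ a‖ ≤ R) {x ε : ℕ → E} (hx : ∀ t ∈ Icc 1 T, ‖x t‖ ≤ 1)
    (hxε : ∀ t ∈ Icc 1 T, ‖x t + ε t‖ ≤ 1)
    (hε : ∀ t ∈ Icc 1 T, ∀ a b, |⟪θ a - θ b, ε t⟫| ≤ ρ * |⟪θ a - θ b, x t⟫|)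
    {p : ℕ → ℝ} {π : ℕ → ι → ℝ} (hwarm : ∀ t ∈ Icc 1 T₀, π t ∈ stdSimplex ℝ ι)
    {η : ℕ → ι → E} {greedy : ℕ → ι}
    (hgreedy : ∀ t ∈ Icc (T₀ + 1) T, ∀ a, ⟪η t a, x t + ε t⟫ ≤ ⟪η t (greedy t), x t + ε t⟫)
    (hclip : ∀ t ∈ Icc (T₀ + 1) T, π t ∈ stdSimplex ℝ ι ∧ 1 - p t ≤ π t (greedy t))
    {best : ℕ → ι} (hbest : ∀ t ∈ Icc 1 T, ∀ a, ⟪θ a, x t⟫ ≤ ⟪θ (best t), x t⟫) :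
    ∑ t ∈ Icc 1 T, regret (π t) (fun a => ⟪θ a, x t⟫) (best t)
      ≤ 2 * T₀ * R + 2 / (1 - ρ) * ∑ t ∈ Icc (T₀ + 1) T, (p t * R + ‖η t - θ‖) := by
  rw [sum_Icc_one_eq_add _ hT, mul_sum]
  refine add_le_add ?warmup (sum_le_sum fun t ht => ?greedy)
  case warmup =>
    calc ∑ t ∈ Icc 1 T₀, regret (π t) (fun a => ⟪θ a, x t⟫) (best t)
        ≤ #(Icc 1 T₀) • (2 * R) := sum_le_card_nsmul _ _ _ fun t ht =>
          regret_le_two_mul (hwarm t ht) (fun a => abs_inner_le_of_norm_le_of_norm_le_one (hθ a)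
            (hx t (Icc_subset_Icc_right hT ht))) (best t)
      _ = 2 * T₀ * R := by rw [Nat.card_Icc, Nat.add_sub_cancel, nsmul_eq_mul]; ring
  case greedy =>
    have htT : t ∈ Icc 1 T := Icc_subset_Icc_left (Nat.le_add_left 1 T₀) ht
    exact regret_le_of_clipped_greedy hρ hθ (hx t htT) (hxε t htT) (hε t htT _ _)
      (hbest t htT _) (hgreedy t ht _) (hclip t ht).1 (hclip t ht).2

end Greedy

section TwoActions

theorem mem_stdSimplex_fin_two {w : Fin 2 → ℝ} (a : Fin 2) :
    w ∈ stdSimplex ℝ (Fin 2) ↔ 0 ≤ w a ∧ 0 ≤ w (1 - a) ∧ w a + w (1 - a) = 1 := by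
  fin_cases a <;> simp [stdSimplex, and_assoc, and_left_comm, add_comm]

theorem mem_stdSimplex_and_le_of_clipped {w : Fin 2 → ℝ} {p : ℝ} {a : Fin 2}
    (hp : p ∈ Set.Icc (0 : ℝ) 1) (hw : w a = 1 - p ∧ w (1 - a) = p) :
    w ∈ stdSimplex ℝ (Fin 2) ∧ 1 - p ≤ w a := by
  simp [mem_stdSimplex_fin_two a, hw.1, hw.2, hp.1, hp.2]

theorem pi_norm_fin_two {E : Type*} [SeminormedAddCommGroup E] (v : Fin 2 → E) :
    ‖v‖ = max ‖v 0‖ ‖v 1‖ := by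
  simp [Pi.norm_def, Fin.univ_succ]

theorem abs_inner_sub_le_fin_two {E : Type*} [SeminormedAddCommGroup E] [InnerProductSpace ℝ E]
    {θ : Fin 2 → E} {x e : E} {ρ : ℝ} (h : |⟪θ 1 - θ 0, e⟫| ≤ ρ * |⟪θ 1 - θ 0, x⟫|) :
    ∀ a b, |⟪θ a - θ b, e⟫| ≤ ρ * |⟪θ a - θ b, x⟫| := by
  have hswap : |⟪θ 0 - θ 1, e⟫| ≤ ρ * |⟪θ 0 - θ 1, x⟫| := by
    simpa only [← neg_sub (θ 1) (θ 0), inner_neg_left, abs_neg] using h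
  simp [Fin.forall_fin_two, h, hswap]

end TwoActions

theorem stmt5 (d : ℕ) (hd : 1 ≤ d) (T₀ T : ℕ) (hT : T₀ < T)
    (Rθ ρ : ℝ) (hRθ : 0 < Rθ) (hρ : ρ ∈ Set.Ioo (0:ℝ) 1)
    (θs : Fin 2 → EuclideanSpace ℝ (Fin d)) (hθ : ∀ a, ‖θs a‖ ≤ Rθ)
    (x ε : ℕ → EuclideanSpace ℝ (Fin d))
    (hx : ∀ t ∈ Finset.Icc 1 T, ‖x t‖ ≤ 1)
    (hxt : ∀ t ∈ Finset.Icc 1 T, ‖x t + ε t‖ ≤ 1)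
    (hε : ∀ t ∈ Finset.Icc 1 T,
      |⟪θs 1 - θs 0, ε t⟫| ≤ ρ * |⟪θs 1 - θs 0, x t⟫|)
    (p₀ : ℕ → ℝ) (hp₀ : ∀ t ∈ Finset.Icc 1 T, p₀ t ∈ Set.Ioc (0:ℝ) (1/2))
    (π : ℕ → Fin 2 → ℝ)
    (hπwarm : ∀ t ∈ Finset.Icc 1 T₀, (∀ a, p₀ t ≤ π t a) ∧ π t 0 + π t 1 = 1)
    (θh : ℕ → Fin 2 → EuclideanSpace ℝ (Fin d))
    (atil : ℕ → Fin 2)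
    (hgreedy : ∀ t ∈ Finset.Icc (T₀+1) T,
      ∀ a, ⟪θh t a, x t + ε t⟫ ≤ ⟪θh t (atil t), x t + ε t⟫)
    (hπgreedy : ∀ t ∈ Finset.Icc (T₀+1) T,
      π t (atil t) = 1 - p₀ t ∧ π t (1 - atil t) = p₀ t)
    (astar : ℕ → Fin 2)
    (hastar : ∀ t ∈ Finset.Icc 1 T, ∀ a, ⟪θs a, x t⟫ ≤ ⟪θs (astar t), x t⟫) :
    ∑ t ∈ Finset.Icc 1 T,
        (⟪θs (astar t), x t⟫ - (π t 0 * ⟪θs 0, x t⟫ + π t 1 * ⟪θs 1, x t⟫))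
      ≤ 2 * T₀ * Rθ + (2 / (1 - ρ)) *
          ∑ t ∈ Finset.Icc (T₀+1) T,
            (p₀ t * Rθ + max ‖θh t 0 - θs 0‖ ‖θh t 1 - θs 1‖) := by
  have hwarm : ∀ t ∈ Icc 1 T₀, π t ∈ stdSimplex ℝ (Fin 2) := fun t ht =>
    have hp := (hp₀ t (Icc_subset_Icc_right hT.le ht)).1.le
    ⟨fun a => hp.trans ((hπwarm t ht).1 a), (Fin.sum_univ_two _).trans (hπwarm t ht).2⟩
  have hclip : ∀ t ∈ Icc (T₀ + 1) T, π t ∈ stdSimplex ℝ (Fin 2) ∧ 1 - p₀ t ≤ π t (atil t) :=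
    fun t ht =>
      have hp := hp₀ t (Icc_subset_Icc_left (Nat.le_add_left 1 T₀) ht)
      mem_stdSimplex_and_le_of_clipped ⟨hp.1.le, hp.2.trans one_half_lt_one.le⟩ (hπgreedy t ht)
  simpa only [regret, Fin.sum_univ_two, pi_norm_fin_two, Pi.sub_apply] using
    stmt5_general hT.le (Set.Ioo_subset_Ico_self hρ) hθ hx hxt
      (fun t ht => abs_inner_sub_le_fin_two (hε t ht)) hwarm hgreedy hclip hastar
end

section
/- Fix integers 0 ≤ T₀ < T, K ≥ 2, constants R_θ > 0 and ρ ∈ (0,1), and θ*_a ∈ ℝ^d with ‖θ*_a‖₂ ≤ R_θ for all a in the action set A = {1,…,K}. For each t ∈ {1,…,T} let x_t, ε_t ∈ ℝ^d with ‖x_t‖₂ ≤ 1, x̃_t := x_t + ε_t, ‖x̃_t‖₂ ≤ 1, and |⟨θ*_{a₁} − θ*_{a₂}, ε_t⟩| ≤ ρ·|⟨θ*_{a₁} − θ*_{a₂}, x_t⟩| for all a₁, a₂ ∈ A. Let p₀^{(t)} ∈ (0, 1/K]. For t ≤ T₀ let (π_t(a))_{a∈A} be any probability vector with π_t(a) ≥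 p₀^{(t)} for all a. For t > T₀ let (θ̂_a^{(t−1)})_{a∈A} ⊂ ℝ^d be arbitrary, let ã_t ∈ argmax_{a∈A} ⟨θ̂_a^{(t−1)}, x̃_t⟩, and set π_t(ã_t) = 1 − (K−1)·p₀^{(t)} and π_t(a) = p₀^{(t)} for a ≠ ã_t. Let a*_t ∈ argmax_{a∈A} ⟨θ*_a, x_t⟩. Then Σ_{t=1}^T [⟨θ*_{a*_t}, x_t⟩ − Σ_{a∈A} π_t(a)·⟨θ*_a, x_t⟩] ≤ 2·T₀·R_θ + (2/(1−ρ))·Σ_{t=T₀+1}^T [(K−1)·p₀^{(t)}·R_θ + max_{a∈A} ‖θ̂_a^{(t−1)} − θ*_a‖₂]. -/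
open RealInnerProductSpace Finset

/-!
Averaged over the randomization, the regret of a round is a convex combination of gaps
`⟪θ s - θ a, x⟫`. Parameters of norm at most `R` make every gap at most `2R`, which settles the
warm-up rounds. In a greedy round the mass outside the greedy action `b` is at most `η` and again
costs at most `2R` per unit. For `b` itself, two estimation errors of size at most `δ` bound the
gap at the *observed* context `x + e` by `2δ`, and the relative error `ρ` on gaps carries this
back to `x` at the price of a factor `1 / (1 - ρ)`.
-/

section ConvexWeights

variable {ι : Type*} [Fintype ι] {w : ι → ℝ} {b : ι}

lemma sum_mul_le_of_mem_stdSimplex {f : ι → ℝ} {A B : ℝ} (hw : w ∈ stdSimplex ℝ ι)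
    (hb : f b ≤ A) (hf : ∀ a ≠ b, f a ≤ B) :
    ∑ a, w a * f a ≤ w b * A + (1 - w b) * B := by
  classical
  have hrest : ∑ a ∈ univ.erase b, w a = 1 - w b := by
    rw [sum_erase_eq_sub (mem_univ b), hw.2]
  rw [← add_sum_erase _ _ (mem_univ b), ← hrest, sum_mul]
  gcongr with a ha
  · exact hw.1 b
  · exact hw.1 a
  · exact hf a (ne_of_mem_erase ha)

lemma mem_stdSimplex_of_clipped {K : ℕ} {p : ℝ} (hK : Fintype.card ι = K) (hp₀ : 0 ≤ p)
    (hp : p ≤ 1 / K) (hb : w b = 1 - ((K : ℝ) - 1) * p) (hw : ∀ a ≠ b, w a = p) :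
    w ∈ stdSimplex ℝ ι := by
  classical
  have hK₀ : (0 : ℝ) < K := Nat.cast_pos.mpr (hK ▸ Fintype.card_pos_iff.mpr ⟨b⟩)
  refine ⟨fun a => ?_, ?_⟩
  · by_cases ha : a = b
    · rw [ha, hb]
      linarith [(le_div_iff₀' hK₀).mp hp]
    · exact hw a ha ▸ hp₀
  · calc ∑ a, w a = w b + ∑ _a ∈ univ.erase b, p := by
          rw [← add_sum_erase _ _ (mem_univ b)]
          exact congrArg _ (sum_congr rfl fun _ ha => hw _ (ne_of_mem_erase ha))
      _ = w b + ((K : ℝ) - 1) * p := by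
          rw [sum_erase_eq_sub (mem_univ b), sum_const, card_univ, hK, nsmul_eq_mul, sub_one_mul]
      _ = 1 := by rw [hb, sub_add_cancel]

lemma mem_stdSimplex_of_warmup_of_clipped {K T₀ T t : ℕ} {p : ℕ → ℝ} {π : ℕ → ι → ℝ} {b : ℕ → ι}
    (hK : Fintype.card ι = K) (hp : ∀ t ∈ Icc 1 T, 0 ≤ p t ∧ p t ≤ 1 / (K : ℝ))
    (hwarm : ∀ t ∈ Icc 1 T₀, (∀ a, p t ≤ π t a) ∧ ∑ a, π t a = 1)
    (hclip : ∀ t ∈ Icc (T₀ + 1) T,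
      π t (b t) = 1 - ((K : ℝ) - 1) * p t ∧ ∀ a ≠ b t, π t a = p t)
    (ht : t ∈ Icc 1 T) : π t ∈ stdSimplex ℝ ι := by
  obtain ⟨hp_nonneg, hp_le⟩ := hp t ht
  obtain ⟨h1t, htT⟩ := mem_Icc.mp ht
  rcases le_or_gt t T₀ with htT₀ | htT₀
  · obtain ⟨hle, hsum⟩ := hwarm t (mem_Icc.mpr ⟨h1t, htT₀⟩)
    exact ⟨fun a => hp_nonneg.trans (hle a), hsum⟩
  · obtain ⟨hb, hne⟩ := hclip t (mem_Icc.mpr ⟨htT₀, htT⟩)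
    exact mem_stdSimplex_of_clipped hK hp_nonneg hp_le hb hne

end ConvexWeights

lemma le_div_one_sub_of_abs_le {z e c ρ : ℝ} (hρ : ρ < 1) (hc : 0 ≤ c)
    (he : |e| ≤ ρ * |z|) (hze : z + e ≤ c) : z ≤ c / (1 - ρ) := by
  have hρ' : 0 < 1 - ρ := sub_pos.mpr hρ
  rcases le_total z 0 with hz | hz
  · exact hz.trans (div_nonneg hc hρ'.le)
  · rw [abs_of_nonneg hz] at he
    rw [le_div_iff₀ hρ']
    linarith [neg_le_of_abs_le he]

section InnerProductSpace

variable {E : Type*} [NormedAddCommGroup E] [InnerProductSpace ℝ E]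

lemma real_inner_le_of_norm_le {u x : E} {R : ℝ} (hu : ‖u‖ ≤ R) (hx : ‖x‖ ≤ 1) :
    ⟪u, x⟫ ≤ R :=
  calc ⟪u, x⟫ ≤ ‖u‖ * ‖x‖ := real_inner_le_norm u x
    _ ≤ ‖u‖ := mul_le_of_le_one_right (norm_nonneg u) hx
    _ ≤ R := hu

lemma inner_sub_le_two_mul_of_norm_le {u v x : E} {R : ℝ} (hu : ‖u‖ ≤ R) (hv : ‖v‖ ≤ R)
    (hx : ‖x‖ ≤ 1) : ⟪u - v, x⟫ ≤ 2 * R :=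
  real_inner_le_of_norm_le ((norm_sub_le_of_le hu hv).trans_eq (two_mul R).symm) hx

lemma inner_sub_le_two_mul_of_inner_le {u v u' v' y : E} {δ : ℝ} (hu : ‖u' - u‖ ≤ δ)
    (hv : ‖v' - v‖ ≤ δ) (hy : ‖y‖ ≤ 1) (h : ⟪u', y⟫ ≤ ⟪v', y⟫) : ⟪u - v, y⟫ ≤ 2 * δ := by
  have hu' : ⟪u - u', y⟫ ≤ δ := real_inner_le_of_norm_le (norm_sub_rev u u' ▸ hu) hy
  have hv' : ⟪v' - v, y⟫ ≤ δ := real_inner_le_of_norm_le hv hy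
  rw [inner_sub_left] at hu' hv' ⊢
  linarith

lemma inner_sub_le_div_of_inner_le {u v u' v' x e : E} {ρ δ : ℝ} (hρ : ρ < 1)
    (hu : ‖u' - u‖ ≤ δ) (hv : ‖v' - v‖ ≤ δ) (hxe : ‖x + e‖ ≤ 1)
    (he : |⟪u - v, e⟫| ≤ ρ * |⟪u - v, x⟫|) (h : ⟪u', x + e⟫ ≤ ⟪v', x + e⟫) :
    ⟪u - v, x⟫ ≤ 2 * δ / (1 - ρ) := by
  have hδ : 0 ≤ δ := (norm_nonneg _).trans hu
  refine le_div_one_sub_of_abs_le hρ (mul_nonneg zero_le_two hδ) he ?_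
  rw [← inner_add_right]
  exact inner_sub_le_two_mul_of_inner_le hu hv hxe h

variable {ι : Type*} [Fintype ι]

/-- The expected regret, against the comparator action `s`, of drawing one action with
probabilities `w` when action `a` yields the linear reward `⟪θ a, x⟫` in the context `x`.
The comparator is arbitrary; an optimal one gives the usual instantaneous regret. -/
noncomputable def linearRegret (θ : ι → E) (x : E) (w : ι → ℝ) (s : ι) : ℝ :=
  ⟪θ s, x⟫ - ∑ a, w a * ⟪θ a, x⟫

variable {θ θh : ι → E} {x e : E} {w : ι → ℝ} {s b : ι} {R ρ η δ : ℝ}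

lemma linearRegret_eq_sum_mul_inner_sub (hw : w ∈ stdSimplex ℝ ι) :
    linearRegret θ x w s = ∑ a, w a * ⟪θ s - θ a, x⟫ := by
  simp only [linearRegret, inner_sub_left, mul_sub, sum_sub_distrib, ← sum_mul, hw.2, one_mul]

lemma linearRegret_le_two_mul (hθ : ∀ a, ‖θ a‖ ≤ R) (hx : ‖x‖ ≤ 1) (hw : w ∈ stdSimplex ℝ ι) :
    linearRegret θ x w s ≤ 2 * R := by
  rw [linearRegret_eq_sum_mul_inner_sub hw]
  exact (convex_Iic (2 * R)).sum_mem (fun a _ => hw.1 a) hw.2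
    fun a _ => inner_sub_le_two_mul_of_norm_le (hθ s) (hθ a) hx

lemma linearRegret_le_of_greedy (hρ : ρ ∈ Set.Ico 0 1) (hθ : ∀ a, ‖θ a‖ ≤ R) (hx : ‖x‖ ≤ 1)
    (hxe : ‖x + e‖ ≤ 1) (he : |⟪θ s - θ b, e⟫| ≤ ρ * |⟪θ s - θ b, x⟫|)
    (hδ : ∀ a, ‖θh a - θ a‖ ≤ δ) (hb : ⟪θh s, x + e⟫ ≤ ⟪θh b, x + e⟫)
    (hw : w ∈ stdSimplex ℝ ι) (hη : 1 - η ≤ w b) :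
    linearRegret θ x w s ≤ 2 / (1 - ρ) * (η * R + δ) := by
  have hρ' : 0 < 1 - ρ := sub_pos.mpr hρ.2
  have hR : 0 ≤ R := (norm_nonneg _).trans (hθ b)
  have hδ₀ : 0 ≤ δ := (norm_nonneg _).trans (hδ b)
  have hwb : w b ≤ 1 := (mem_Icc_of_mem_stdSimplex hw b).2
  have hηR : 0 ≤ η * (2 * R) := mul_nonneg (by linarith) (by linarith)
  have hgap : ⟪θ s - θ b, x⟫ ≤ 2 * δ / (1 - ρ) :=
    inner_sub_le_div_of_inner_le hρ.2 (hδ s) (hδ b) hxe he hb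
  calc linearRegret θ x w s = ∑ a, w a * ⟪θ s - θ a, x⟫ := linearRegret_eq_sum_mul_inner_sub hw
    _ ≤ w b * (2 * δ / (1 - ρ)) + (1 - w b) * (2 * R) :=
        sum_mul_le_of_mem_stdSimplex hw hgap
          fun a _ => inner_sub_le_two_mul_of_norm_le (hθ s) (hθ a) hx
    _ ≤ 2 * δ / (1 - ρ) + η * (2 * R) := by
        gcongr
        · exact mul_le_of_le_one_left (by positivity) hwb
        · linarith
    _ ≤ 2 * δ / (1 - ρ) + η * (2 * R) / (1 - ρ) := by
        gcongr
        exact le_div_self hηR hρ' (sub_le_self 1 hρ.1)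
    _ = 2 / (1 - ρ) * (η * R + δ) := by ring

end InnerProductSpace

theorem stmt7_general {ι E : Type*} [Fintype ι] [NormedAddCommGroup E] [InnerProductSpace ℝ E]
    {T₀ T : ℕ} (hT : T₀ ≤ T) {R ρ : ℝ} (hρ : ρ ∈ Set.Ico 0 1) {θ : ι → E}
    (hθ : ∀ a, ‖θ a‖ ≤ R) {x ε : ℕ → E} (hx : ∀ t ∈ Icc 1 T, ‖x t‖ ≤ 1)
    (hxε : ∀ t ∈ Icc (T₀ + 1) T, ‖x t + ε t‖ ≤ 1) {π : ℕ → ι → ℝ}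
    (hπ : ∀ t ∈ Icc 1 T, π t ∈ stdSimplex ℝ ι) {θh : ℕ → ι → E} {b s : ℕ → ι}
    (hε : ∀ t ∈ Icc (T₀ + 1) T,
      |⟪θ (s t) - θ (b t), ε t⟫| ≤ ρ * |⟪θ (s t) - θ (b t), x t⟫|)
    (hb : ∀ t ∈ Icc (T₀ + 1) T, ⟪θh t (s t), x t + ε t⟫ ≤ ⟪θh t (b t), x t + ε t⟫)
    {η : ℕ → ℝ} (hη : ∀ t ∈ Icc (T₀ + 1) T, 1 - η t ≤ π t (b t)) :
    ∑ t ∈ Icc 1 T, linearRegret θ (x t) (π t) (s t) ≤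
      2 * T₀ * R + 2 / (1 - ρ) * ∑ t ∈ Icc (T₀ + 1) T, (η t * R + ⨆ a, ‖θh t a - θ a‖) := by
  have hwarm : Icc 1 T₀ ⊆ Icc 1 T := Icc_subset_Icc_right hT
  have hlate : Icc (T₀ + 1) T ⊆ Icc 1 T := Icc_subset_Icc_left (Nat.le_add_left 1 T₀)
  have hsplit (f : ℕ → ℝ) :
      ∑ t ∈ Icc 1 T₀, f t + ∑ t ∈ Icc (T₀ + 1) T, f t = ∑ t ∈ Icc 1 T, f t := by
    simpa only [← Icc_add_one_left_eq_Ioc, zero_add] using sum_Ioc_consecutive f T₀.zero_le hT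
  rw [← hsplit, mul_sum]
  refine add_le_add ?_ (sum_le_sum fun t ht => ?_)
  · calc ∑ t ∈ Icc 1 T₀, linearRegret θ (x t) (π t) (s t) ≤ #(Icc 1 T₀) • (2 * R) :=
          sum_le_card_nsmul _ _ _ fun t ht =>
            linearRegret_le_two_mul hθ (hx t (hwarm ht)) (hπ t (hwarm ht))
      _ = 2 * T₀ * R := by rw [Nat.card_Icc, Nat.add_sub_cancel, nsmul_eq_mul]; ring
  · have hδ (a : ι) : ‖θh t a - θ a‖ ≤ ⨆ a, ‖θh t a - θ a‖ :=
      le_ciSup (f := fun a => ‖θh t a - θ a‖) (Set.finite_range _).bddAbove a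
    exact linearRegret_le_of_greedy hρ hθ (hx t (hlate ht)) (hxε t ht) (hε t ht) hδ (hb t ht)
      (hπ t (hlate ht)) (hη t ht)

theorem stmt7 (d : ℕ) (hd : 1 ≤ d) (K : ℕ) (hK : 2 ≤ K)
    (T₀ T : ℕ) (hT : T₀ < T)
    (Rθ ρ : ℝ) (hRθ : 0 < Rθ) (hρ : ρ ∈ Set.Ioo (0:ℝ) 1)
    (θs : Fin K → EuclideanSpace ℝ (Fin d)) (hθ : ∀ a, ‖θs a‖ ≤ Rθ)
    (x ε : ℕ → EuclideanSpace ℝ (Fin d))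
    (hx : ∀ t ∈ Finset.Icc 1 T, ‖x t‖ ≤ 1)
    (hxt : ∀ t ∈ Finset.Icc 1 T, ‖x t + ε t‖ ≤ 1)
    (hε : ∀ t ∈ Finset.Icc 1 T, ∀ a₁ a₂ : Fin K,
      |⟪θs a₁ - θs a₂, ε t⟫| ≤ ρ * |⟪θs a₁ - θs a₂, x t⟫|)
    (p₀ : ℕ → ℝ)
    (hp₀ : ∀ t ∈ Finset.Icc 1 T, 0 < p₀ t ∧ p₀ t ≤ 1 / (K : ℝ))
    (π : ℕ → Fin K → ℝ)
    (hπwarm : ∀ t ∈ Finset.Icc 1 T₀,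
      (∀ a, p₀ t ≤ π t a) ∧ ∑ a, π t a = 1)
    (θh : ℕ → Fin K → EuclideanSpace ℝ (Fin d))
    (atil : ℕ → Fin K)
    (hgreedy : ∀ t ∈ Finset.Icc (T₀+1) T,
      ∀ a, ⟪θh t a, x t + ε t⟫ ≤ ⟪θh t (atil t), x t + ε t⟫)
    (hπgreedy : ∀ t ∈ Finset.Icc (T₀+1) T,
      π t (atil t) = 1 - ((K : ℝ) - 1) * p₀ t ∧ ∀ a ≠ atil t, π t a = p₀ t)
    (astar : ℕ → Fin K)
    (hastar : ∀ t ∈ Finset.Icc 1 T, ∀ a, ⟪θs a, x t⟫ ≤ ⟪θs (astar t), x t⟫) :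
    ∑ t ∈ Finset.Icc 1 T,
        (⟪θs (astar t), x t⟫ - ∑ a, π t a * ⟪θs a, x t⟫)
      ≤ 2 * T₀ * Rθ + (2 / (1 - ρ)) *
          ∑ t ∈ Finset.Icc (T₀+1) T,
            (((K : ℝ) - 1) * p₀ t * Rθ + ⨆ a, ‖θh t a - θs a‖) := by
  have hlate : Icc (T₀ + 1) T ⊆ Icc 1 T := Icc_subset_Icc_left (Nat.le_add_left 1 T₀)
  exact stmt7_general hT.le (Set.Ioo_subset_Ico_self hρ) hθ hx (fun t ht => hxt t (hlate ht))
    (fun _ => mem_stdSimplex_of_warmup_of_clipped (Fintype.card_fin K)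
      (fun t ht => (hp₀ t ht).imp_left le_of_lt) hπwarm hπgreedy)
    (fun t ht => hε t (hlate ht) _ _) (fun t ht => hgreedy t ht _)
    fun t ht => (hπgreedy t ht).1.ge
end

section
/- Fix integers 0 ≤ T₀ < T, K ≥ 2, constants R_θ > 0, ρ ∈ (0,1), p₀ ∈ (0, 1/K], and θ*_a ∈ ℝ^d with ‖θ*_a‖₂ ≤ R_θ for all a in A = {1,…,K}. For each t ∈ {1,…,T} let x_t, ε_t ∈ ℝ^d with ‖x_t‖₂ ≤ 1, x̃_t := x_t + ε_t, ‖x̃_t‖₂ ≤ 1, and |⟨θ*_{a₁} − θ*_{a₂}, ε_t⟩| ≤ ρ·|⟨θ*_{a₁} − θ*_{a₂}, x_t⟩| for all a₁, a₂ ∈ A. For t ≤ T₀ let (π_t(a))_{a∈A} be any probability vector with π_t(a) ≥ p₀ for all a. For t > T₀ let (θ̂_a^{(t−1)})_{a∈A} ⊂ ℝ^d be arbitrary, let ã_t ∈ argmax_{a∈A} ⟨θ̂_a^{(t−1)}, x̃_t⟩, and set π_t(ã_t) = 1 − (K−1)·p₀ and π_t(a) = p₀ for a ≠ ã_t. Let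 a*_t ∈ argmax_{a∈A} ⟨θ*_a, x_t⟩ and define the clipped benchmark π̄*_t(a*_t) = 1 − (K−1)·p₀ and π̄*_t(a) = p₀ for a ≠ a*_t. Then Σ_{t=1}^T [Σ_{a∈A} π̄*_t(a)·⟨θ*_a, x_t⟩ − Σ_{a∈A} π_t(a)·⟨θ*_a, x_t⟩] ≤ 2·T₀·R_θ + (2·(1−K·p₀)/(1−ρ))·Σ_{t=T₀+1}^T max_{a∈A} ‖θ̂_a^{(t−1)} − θ*_a‖₂. -/
open RealInnerProductSpace Finset

/-!
In an exploration round both policies are probability vectors and the rewards lie in `[-Rθ, Rθ]`,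
so the regret is at most `2 Rθ`. In a greedy round the benchmark and the policy played are clipped
at the same level, so their uniform parts cancel and the regret is `1 - K p₀` times the
suboptimality gap `⟪θ* i - θ* j, x⟫` of the greedy action `j` against the optimal action `i`. Since
this gap is nonnegative, the relative error assumption keeps at least a fraction `1 - ρ` of it in
the perturbed context, where `j` beats `i` for the estimates; there the gap can only come from the
estimation errors of `i` and `j`.
-/

section Policy

variable {ι : Type*} [Fintype ι]

theorem sum_mul_sub_sum_mul_le_of_mem_stdSimplex {w v f : ι → ℝ} {m M : ℝ}
    (hw : w ∈ stdSimplex ℝ ι) (hv : v ∈ stdSimplex ℝ ι) (hf : ∀ a, f a ∈ Set.Icc m M) :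
    ∑ a, w a * f a - ∑ a, v a * f a ≤ M - m := by
  have value_mem {u : ι → ℝ} (hu : u ∈ stdSimplex ℝ ι) : ∑ a, u a * f a ∈ Set.Icc m M :=
    (convex_Icc m M).sum_mem (fun a _ => hu.1 a) hu.2 fun a _ => hf a
  exact sub_le_sub (value_mem hw).2 (value_mem hv).1

variable [DecidableEq ι]

/-- The policy clipped at level `p` that favours the action `b`: every other action is played with
probability `p`, and `b` with the remaining probability. It is defined for every real `p`, and is a
probability vector when `0 ≤ p` and `Fintype.card ι * p ≤ 1`. -/
noncomputable def clippedPolicy (p : ℝ) (b a : ι) : ℝ :=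
  if a = b then 1 - ((Fintype.card ι : ℝ) - 1) * p else p

theorem eq_clippedPolicy_iff {p : ℝ} {b : ι} {w : ι → ℝ} :
    w = clippedPolicy p b ↔
      w b = 1 - ((Fintype.card ι : ℝ) - 1) * p ∧ ∀ a ≠ b, w a = p := by
  constructor
  · rintro rfl
    exact ⟨if_pos rfl, fun a ha => if_neg ha⟩
  · rintro ⟨hb, hne⟩
    funext a
    obtain rfl | ha := eq_or_ne a b
    · exact hb.trans (if_pos rfl).symm
    · exact (hne a ha).trans (if_neg ha).symm

theorem sum_clippedPolicy_mul (p : ℝ) (b : ι) (f : ι → ℝ) :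
    ∑ a, clippedPolicy p b a * f a = (1 - Fintype.card ι * p) * f b + p * ∑ a, f a := by
  have split_uniform (a : ι) : clippedPolicy p b a * f a
      = (if a = b then (1 - Fintype.card ι * p) * f a else 0) + p * f a := by
    unfold clippedPolicy
    split_ifs <;> ring
  simp only [split_uniform, sum_add_distrib, sum_ite_eq', mem_univ, if_true, mul_sum]

theorem sum_clippedPolicy_mul_sub (p : ℝ) (b c : ι) (f : ι → ℝ) :
    ∑ a, clippedPolicy p b a * f a - ∑ a, clippedPolicy p c a * f a
      = (1 - Fintype.card ι * p) * (f b - f c) := by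
  rw [sum_clippedPolicy_mul, sum_clippedPolicy_mul]
  ring

theorem clippedPolicy_mem_stdSimplex {p : ℝ} (hp : 0 ≤ p) (hcard : Fintype.card ι * p ≤ 1)
    (b : ι) : clippedPolicy p b ∈ stdSimplex ℝ ι := by
  refine ⟨fun a => ?_, ?_⟩
  · unfold clippedPolicy
    split_ifs <;> linarith
  · simpa [mul_comm p] using sum_clippedPolicy_mul p b 1

end Policy

section Regret

variable {E : Type*} [SeminormedAddCommGroup E] [InnerProductSpace ℝ E]

theorem one_sub_mul_inner_le_inner_add {v x e : E} {ρ : ℝ} (hx : 0 ≤ ⟪v, x⟫)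
    (he : |⟪v, e⟫| ≤ ρ * |⟪v, x⟫|) : (1 - ρ) * ⟪v, x⟫ ≤ ⟪v, x + e⟫ := by
  rw [abs_of_nonneg hx] at he
  rw [inner_add_right]
  linarith [neg_le_of_abs_le he]

theorem inner_sub_le_of_inner_le {u v u' v' y : E} (h : ⟪u', y⟫ ≤ ⟪v', y⟫) :
    ⟪u - v, y⟫ ≤ (‖u' - u‖ + ‖v' - v‖) * ‖y‖ :=
  calc ⟪u - v, y⟫ = ⟪u', y⟫ - ⟪v', y⟫ - ⟪u' - u, y⟫ + ⟪v' - v, y⟫ := by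
        simp only [inner_sub_left]
        ring
    _ ≤ ‖u' - u‖ * ‖y‖ + ‖v' - v‖ * ‖y‖ := by
        linarith [neg_le_of_abs_le (abs_real_inner_le_norm (u' - u) y),
          real_inner_le_norm (v' - v) y]
    _ = (‖u' - u‖ + ‖v' - v‖) * ‖y‖ := (add_mul _ _ _).symm

theorem inner_sub_le_of_greedy {ι : Type*} [Finite ι] {θ θh : ι → E} {x e : E} {ρ : ℝ} {i j : ι}
    (hρ : ρ < 1) (hxe : ‖x + e‖ ≤ 1) (he : |⟪θ i - θ j, e⟫| ≤ ρ * |⟪θ i - θ j, x⟫|)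
    (hgreedy : ⟪θh i, x + e⟫ ≤ ⟪θh j, x + e⟫) (hopt : ⟪θ j, x⟫ ≤ ⟪θ i, x⟫) :
    ⟪θ i - θ j, x⟫ ≤ 2 / (1 - ρ) * ⨆ a, ‖θh a - θ a‖ := by
  have hgap : 0 ≤ ⟪θ i - θ j, x⟫ := by
    rw [inner_sub_left]
    exact sub_nonneg.2 hopt
  have le_sup : ∀ a, ‖θh a - θ a‖ ≤ ⨆ a, ‖θh a - θ a‖ :=
    le_ciSup (Set.finite_range _).bddAbove
  rw [div_mul_eq_mul_div, le_div_iff₀' (sub_pos.2 hρ)]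
  calc (1 - ρ) * ⟪θ i - θ j, x⟫ ≤ ⟪θ i - θ j, x + e⟫ := one_sub_mul_inner_le_inner_add hgap he
    _ ≤ (‖θh i - θ i‖ + ‖θh j - θ j‖) * ‖x + e‖ := inner_sub_le_of_inner_le hgreedy
    _ ≤ ‖θh i - θ i‖ + ‖θh j - θ j‖ := mul_le_of_le_one_right (by positivity) hxe
    _ ≤ 2 * ⨆ a, ‖θh a - θ a‖ := by linarith [le_sup i, le_sup j]

variable {ι : Type*} [Fintype ι]

theorem sum_mul_inner_sub_le_of_mem_stdSimplex {w v : ι → ℝ} {θ : ι → E} {x : E} {R : ℝ}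
    (hw : w ∈ stdSimplex ℝ ι) (hv : v ∈ stdSimplex ℝ ι) (hθ : ∀ a, ‖θ a‖ ≤ R) (hx : ‖x‖ ≤ 1) :
    ∑ a, w a * ⟪θ a, x⟫ - ∑ a, v a * ⟪θ a, x⟫ ≤ 2 * R := by
  have reward_mem (a : ι) : ⟪θ a, x⟫ ∈ Set.Icc (-R) R :=
    abs_le.1 <|
      calc |⟪θ a, x⟫| ≤ ‖θ a‖ * ‖x‖ := abs_real_inner_le_norm _ _
        _ ≤ ‖θ a‖ := mul_le_of_le_one_right (norm_nonneg _) hx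
        _ ≤ R := hθ a
  linarith [sum_mul_sub_sum_mul_le_of_mem_stdSimplex hw hv reward_mem]

variable [DecidableEq ι]

theorem sum_clippedPolicy_mul_inner_sub_le {θ θh : ι → E} {x e : E} {p ρ : ℝ} {i j : ι}
    (hcard : Fintype.card ι * p ≤ 1) (hρ : ρ < 1) (hxe : ‖x + e‖ ≤ 1)
    (he : |⟪θ i - θ j, e⟫| ≤ ρ * |⟪θ i - θ j, x⟫|)
    (hgreedy : ⟪θh i, x + e⟫ ≤ ⟪θh j, x + e⟫) (hopt : ⟪θ j, x⟫ ≤ ⟪θ i, x⟫) :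
    ∑ a, clippedPolicy p i a * ⟪θ a, x⟫ - ∑ a, clippedPolicy p j a * ⟪θ a, x⟫
      ≤ 2 * (1 - Fintype.card ι * p) / (1 - ρ) * ⨆ a, ‖θh a - θ a‖ :=
  calc ∑ a, clippedPolicy p i a * ⟪θ a, x⟫ - ∑ a, clippedPolicy p j a * ⟪θ a, x⟫
      = (1 - Fintype.card ι * p) * ⟪θ i - θ j, x⟫ := by
        rw [sum_clippedPolicy_mul_sub, inner_sub_left]
    _ ≤ (1 - Fintype.card ι * p) * (2 / (1 - ρ) * ⨆ a, ‖θh a - θ a‖) :=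
        mul_le_mul_of_nonneg_left (inner_sub_le_of_greedy hρ hxe he hgreedy hopt)
          (sub_nonneg.2 hcard)
    _ = 2 * (1 - Fintype.card ι * p) / (1 - ρ) * ⨆ a, ‖θh a - θ a‖ := by ring

theorem stmt8_general {T₀ T : ℕ} (hT : T₀ ≤ T) {R ρ p : ℝ} (hρ : ρ < 1) (hp : 0 ≤ p)
    (hcard : Fintype.card ι * p ≤ 1) {θ : ι → E} (hθ : ∀ a, ‖θ a‖ ≤ R) {x ε : ℕ → E}
    (hx : ∀ t ∈ Icc 1 T₀, ‖x t‖ ≤ 1) (hxε : ∀ t ∈ Icc (T₀ + 1) T, ‖x t + ε t‖ ≤ 1)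
    (hε : ∀ t ∈ Icc (T₀ + 1) T, ∀ a b, |⟪θ a - θ b, ε t⟫| ≤ ρ * |⟪θ a - θ b, x t⟫|)
    {π : ℕ → ι → ℝ} (hπ : ∀ t ∈ Icc 1 T₀, π t ∈ stdSimplex ℝ ι)
    {θh : ℕ → ι → E} {greedy : ℕ → ι}
    (hgreedy : ∀ t ∈ Icc (T₀ + 1) T, ∀ a, ⟪θh t a, x t + ε t⟫ ≤ ⟪θh t (greedy t), x t + ε t⟫)
    (hπgreedy : ∀ t ∈ Icc (T₀ + 1) T, π t = clippedPolicy p (greedy t))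
    {opt : ℕ → ι} (hopt : ∀ t ∈ Icc (T₀ + 1) T, ∀ a, ⟪θ a, x t⟫ ≤ ⟪θ (opt t), x t⟫) :
    ∑ t ∈ Icc 1 T,
        (∑ a, clippedPolicy p (opt t) a * ⟪θ a, x t⟫ - ∑ a, π t a * ⟪θ a, x t⟫)
      ≤ 2 * T₀ * R + 2 * (1 - Fintype.card ι * p) / (1 - ρ) *
          ∑ t ∈ Icc (T₀ + 1) T, ⨆ a, ‖θh t a - θ a‖ := by
  set regret : ℕ → ℝ := fun t =>
    ∑ a, clippedPolicy p (opt t) a * ⟪θ a, x t⟫ - ∑ a, π t a * ⟪θ a, x t⟫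
  have exploration_le : ∀ t ∈ Icc 1 T₀, regret t ≤ 2 * R := fun t ht =>
    sum_mul_inner_sub_le_of_mem_stdSimplex (clippedPolicy_mem_stdSimplex hp hcard (opt t))
      (hπ t ht) hθ (hx t ht)
  have greedy_le : ∀ t ∈ Icc (T₀ + 1) T,
      regret t ≤ 2 * (1 - Fintype.card ι * p) / (1 - ρ) * ⨆ a, ‖θh t a - θ a‖ := fun t ht => by
    simp only [regret, hπgreedy t ht]
    exact sum_clippedPolicy_mul_inner_sub_le hcard hρ (hxε t ht) (hε t ht _ _)
      (hgreedy t ht _) (hopt t ht _)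
  calc ∑ t ∈ Icc 1 T, regret t = ∑ t ∈ Icc 1 T₀, regret t + ∑ t ∈ Icc (T₀ + 1) T, regret t := by
        simpa only [← Icc_add_one_left_eq_Ioc, zero_add] using
          (sum_Ioc_consecutive regret (Nat.zero_le T₀) hT).symm
    _ ≤ 2 * T₀ * R + 2 * (1 - Fintype.card ι * p) / (1 - ρ) *
          ∑ t ∈ Icc (T₀ + 1) T, ⨆ a, ‖θh t a - θ a‖ := by
        rw [mul_sum]
        refine add_le_add ((sum_le_card_nsmul _ _ _ exploration_le).trans_eq ?_)
          (sum_le_sum greedy_le)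
        rw [Nat.card_Icc, nsmul_eq_mul, Nat.add_sub_cancel]
        ring

end Regret

theorem stmt8 (d : ℕ) (hd : 1 ≤ d) (K : ℕ) (hK : 2 ≤ K)
    (T₀ T : ℕ) (hT : T₀ < T)
    (Rθ ρ p₀ : ℝ) (hRθ : 0 < Rθ) (hρ : ρ ∈ Set.Ioo (0:ℝ) 1)
    (hp₀ : 0 < p₀ ∧ p₀ ≤ 1 / (K : ℝ))
    (θs : Fin K → EuclideanSpace ℝ (Fin d)) (hθ : ∀ a, ‖θs a‖ ≤ Rθ)
    (x ε : ℕ → EuclideanSpace ℝ (Fin d))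
    (hx : ∀ t ∈ Finset.Icc 1 T, ‖x t‖ ≤ 1)
    (hxt : ∀ t ∈ Finset.Icc 1 T, ‖x t + ε t‖ ≤ 1)
    (hε : ∀ t ∈ Finset.Icc 1 T, ∀ a₁ a₂ : Fin K,
      |⟪θs a₁ - θs a₂, ε t⟫| ≤ ρ * |⟪θs a₁ - θs a₂, x t⟫|)
    (π : ℕ → Fin K → ℝ)
    (hπwarm : ∀ t ∈ Finset.Icc 1 T₀,
      (∀ a, p₀ ≤ π t a) ∧ ∑ a, π t a = 1)
    (θh : ℕ → Fin K → EuclideanSpace ℝ (Fin d))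
    (atil : ℕ → Fin K)
    (hgreedy : ∀ t ∈ Finset.Icc (T₀+1) T,
      ∀ a, ⟪θh t a, x t + ε t⟫ ≤ ⟪θh t (atil t), x t + ε t⟫)
    (hπgreedy : ∀ t ∈ Finset.Icc (T₀+1) T,
      π t (atil t) = 1 - ((K : ℝ) - 1) * p₀ ∧ ∀ a ≠ atil t, π t a = p₀)
    (astar : ℕ → Fin K)
    (hastar : ∀ t ∈ Finset.Icc 1 T, ∀ a, ⟪θs a, x t⟫ ≤ ⟪θs (astar t), x t⟫) :
    ∑ t ∈ Finset.Icc 1 T,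
        ((∑ a, (if a = astar t then 1 - ((K : ℝ) - 1) * p₀ else p₀) * ⟪θs a, x t⟫)
          - ∑ a, π t a * ⟪θs a, x t⟫)
      ≤ 2 * T₀ * Rθ + (2 * (1 - K * p₀) / (1 - ρ)) *
          ∑ t ∈ Finset.Icc (T₀+1) T, ⨆ a, ‖θh t a - θs a‖ := by
  have warm_sub : Icc 1 T₀ ⊆ Icc 1 T := Icc_subset_Icc_right hT.le
  have greedy_sub : Icc (T₀ + 1) T ⊆ Icc 1 T := Icc_subset_Icc_left (Nat.le_add_left 1 T₀)
  have hcard : Fintype.card (Fin K) * p₀ ≤ 1 := by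
    simpa only [Fintype.card_fin] using (le_div_iff₀' (by positivity)).1 hp₀.2
  simpa only [clippedPolicy, Fintype.card_fin] using
    stmt8_general hT.le hρ.2 hp₀.1.le hcard hθ
      (hx · <| warm_sub ·) (hxt · <| greedy_sub ·) (hε · <| greedy_sub ·)
      (fun t ht => ⟨fun a => hp₀.1.le.trans ((hπwarm t ht).1 a), (hπwarm t ht).2⟩) hgreedy
      (fun t ht => eq_clippedPolicy_iff.2 (by simpa only [Fintype.card_fin] using hπgreedy t ht))
      (hastar · <| greedy_sub ·)
end

section
/- Let d ≥ 1, x ∈ ℝ^d, and let Σ_e be a d×d positive semidefinite matrix. Let ε be a random vector in ℝ^d with E[ε] = 0 and E[ε εᵀ] = Σ_e, set x̃ := x + ε, and assume ‖x̃‖₂ ≤ 1 almost surely. Let q ∈ (0,1] and let π(·|·) be a measurable map with π(0|v) + π(1|v) = 1 and π(a'|v) ≥ q for all v ∈ ℝ^d, a' ∈ {0,1}. Let A be a {0,1}-valued random variable whose conditional distribution given ε satisfies P(A = a' | ε) = π(a' | x̃). Fix numbers π^{nd}(0), π^{nd}(1) ≥ 0 with π^{nd}(0) + π^{nd}(1)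 = 1. Then for each a ∈ {0,1}: E[(π^{nd}(A)/π(A | x̃)) · 1{A = a} · x̃ x̃ᵀ] = π^{nd}(a) · (x xᵀ + Σ_e). -/
/-!
Conditioning on `A = a` multiplies the law of the noisy context by the density `π a`, which the
weight `1 / π a` cancels exactly. What remains is an unweighted expectation under the law of the
context alone; for centred noise its second moment is `x xᵀ + Σₑ`.
-/

open MeasureTheory RealInnerProductSpace

open ProbabilityTheory in
theorem integral_const_add_mul_const_add {Ω : Type*} [MeasurableSpace Ω] {μ : Measure Ω}
    [IsProbabilityMeasure μ] {X Y : Ω → ℝ} (hX : MemLp X 2 μ) (hY : MemLp Y 2 μ) (a b : ℝ) :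
    ∫ ω, (a + X ω) * (b + Y ω) ∂μ = (a + μ[X]) * (b + μ[Y]) + cov[X, Y; μ] := by
  have hXint : Integrable X μ := hX.integrable one_le_two
  have hYint : Integrable Y μ := hY.integrable one_le_two
  have hcov : cov[X, Y; μ] = ∫ ω, (a + X ω) * (b + Y ω) ∂μ - (a + μ[X]) * (b + μ[Y]) := by
    have hXadd : MemLp (fun ω => a + X ω) 2 μ := (memLp_const a).add hX
    have hYadd : MemLp (fun ω => b + Y ω) 2 μ := (memLp_const b).add hY
    rw [← covariance_const_add_left hXint a, ← covariance_const_add_right hYint b,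
      covariance_eq_sub hXadd hYadd, integral_add (integrable_const a) hXint,
      integral_add (integrable_const b) hYint]
    simp
  rw [hcov, add_sub_cancel]

theorem integral_const_add_mul_const_add_of_integral_eq_zero {Ω : Type*} [MeasurableSpace Ω]
    {μ : Measure Ω} [IsProbabilityMeasure μ] {X Y : Ω → ℝ} (hX : MemLp X 2 μ) (hY : MemLp Y 2 μ)
    (hX0 : ∫ ω, X ω ∂μ = 0) (hY0 : ∫ ω, Y ω ∂μ = 0) (a b : ℝ) :
    ∫ ω, (a + X ω) * (b + Y ω) ∂μ = a * b + ∫ ω, X ω * Y ω ∂μ := by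
  rw [integral_const_add_mul_const_add hX hY, ProbabilityTheory.covariance_eq_sub hX hY, hX0, hY0]
  simp

theorem memLp_of_ae_norm_const_add_le {Ω E : Type*} [MeasurableSpace Ω] [NormedAddCommGroup E]
    {μ : Measure Ω} [IsFiniteMeasure μ] {X : Ω → E} (hX : AEStronglyMeasurable X μ) {c : E}
    {C : ℝ} (h : ∀ᵐ ω ∂μ, ‖c + X ω‖ ≤ C) (p : ENNReal) : MemLp X p μ := by
  have hadd : MemLp (fun ω => c + X ω) p μ :=
    .of_bound (aestronglyMeasurable_const.add hX) C h
  simpa only [Pi.sub_def, add_sub_cancel_left] using hadd.sub (memLp_const c)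

section Propensity

variable {Ω E F α : Type*} [MeasurableSpace Ω] [MeasurableSpace E] {μ : Measure Ω} {s : Set Ω}
  {Y : Ω → E} {p : E → ℝ}

/-- `p` is the propensity score of the event `s` given the covariate `Y`, i.e. `P(s | Y) = p(Y)`.
It is encoded as an identity of laws: `μ(s ∩ {Y ∈ B}) = ∫_B p d(law of Y)` for measurable `B`.
Negative values of `p` count as `0`. -/
def IsPropensityScore (μ : Measure Ω) (s : Set Ω) (Y : Ω → E) (p : E → ℝ) : Prop :=
  (μ.restrict s).map Y = (μ.map Y).withDensity fun y => ENNReal.ofReal (p y)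

theorem isPropensityScore_of_measureReal_inter_preimage_eq [IsFiniteMeasure μ]
    (hY : Measurable Y) (hp : Measurable p) (hp0 : 0 ≤ p) (hpint : Integrable (p ∘ Y) μ)
    (h : ∀ B, MeasurableSet B → μ.real (Y ⁻¹' B ∩ s) = ∫ ω in Y ⁻¹' B, p (Y ω) ∂μ) :
    IsPropensityScore μ s Y p := by
  refine Measure.ext fun B hB => ?_
  calc (μ.restrict s).map Y B
      = μ (Y ⁻¹' B ∩ s) := by rw [Measure.map_apply hY hB, Measure.restrict_apply (hY hB)]
    _ = ENNReal.ofReal (∫ ω in Y ⁻¹' B, p (Y ω) ∂μ) := by rw [← h B hB, ofReal_measureReal]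
    _ = ∫⁻ ω in Y ⁻¹' B, ENNReal.ofReal (p (Y ω)) ∂μ :=
        ofReal_integral_eq_lintegral_ofReal hpint.integrableOn (.of_forall fun ω => hp0 (Y ω))
    _ = (μ.map Y).withDensity (fun y => ENNReal.ofReal (p y)) B := by
        rw [withDensity_apply _ hB, setLIntegral_map hB hp.ennreal_ofReal hY]

theorem isPropensityScore_of_integral_ite_mul_eq [IsFiniteMeasure μ] [Fintype α] [DecidableEq α]
    {A : Ω → α} {a : α} (hA : MeasurableSet (A ⁻¹' {a})) (hY : Measurable Y)
    {π : α → E → ℝ} (hπ : Measurable (π a)) (hsimplex : ∀ y, (π · y) ∈ stdSimplex ℝ α)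
    (h : ∀ g : E → ℝ, Measurable g → Integrable (fun ω => g (Y ω)) μ →
      ∫ ω, (if A ω = a then (1 : ℝ) else 0) * g (Y ω) ∂μ = ∫ ω, π a (Y ω) * g (Y ω) ∂μ) :
    IsPropensityScore μ (A ⁻¹' {a}) Y (π a) := by
  classical
  have hπ01 : ∀ y, π a y ∈ Set.Icc 0 1 := fun y => mem_Icc_of_mem_stdSimplex (hsimplex y) a
  have hπint : Integrable (π a ∘ Y) μ :=
    .of_mem_Icc 0 1 (hπ.comp hY).aemeasurable (.of_forall fun ω => hπ01 (Y ω))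
  refine isPropensityScore_of_measureReal_inter_preimage_eq hY hπ (fun y => (hπ01 y).1) hπint
    fun B hB => ?_
  have hYB : MeasurableSet (Y ⁻¹' B) := hY hB
  have hBint : Integrable (fun ω => B.indicator (1 : E → ℝ) (Y ω)) μ :=
    (integrable_const (1 : ℝ)).indicator hYB
  calc μ.real (Y ⁻¹' B ∩ A ⁻¹' {a})
      = ∫ ω, (if A ω = a then (1 : ℝ) else 0) * B.indicator 1 (Y ω) ∂μ := by
        rw [← integral_indicator_one (hYB.inter hA)]
        congr 1 with ω
        by_cases hω : A ω = a <;> simp [Set.indicator, hω]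
    _ = ∫ ω, π a (Y ω) * B.indicator 1 (Y ω) ∂μ := h _ (measurable_one.indicator hB) hBint
    _ = ∫ ω in Y ⁻¹' B, π a (Y ω) ∂μ := by
        rw [← integral_indicator hYB]
        congr 1 with ω
        simp [Set.indicator]

namespace IsPropensityScore

theorem setIntegral_inv_smul [NormedAddCommGroup F] [NormedSpace ℝ F]
    (h : IsPropensityScore μ s Y p) (hY : AEMeasurable Y μ) (hp : Measurable p)
    (hpos : ∀ᵐ ω ∂μ, 0 < p (Y ω)) {f : E → F} (hf : AEStronglyMeasurable f (μ.map Y)) :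
    ∫ ω in s, (p (Y ω))⁻¹ • f (Y ω) ∂μ = ∫ ω, f (Y ω) ∂μ := by
  have hweighted : AEStronglyMeasurable (fun y => (p y)⁻¹ • f y) (μ.map Y) :=
    hp.inv.aestronglyMeasurable.smul hf
  have hac : (μ.restrict s).map Y ≪ μ.map Y := h ▸ withDensity_absolutelyContinuous _ _
  calc ∫ ω in s, (p (Y ω))⁻¹ • f (Y ω) ∂μ
      = ∫ y, (p y)⁻¹ • f y ∂(μ.restrict s).map Y :=
        (integral_map hY.restrict (hweighted.mono_ac hac)).symm
    _ = ∫ y, (ENNReal.ofReal (p y)).toReal • (p y)⁻¹ • f y ∂μ.map Y := by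
        rw [h, integral_withDensity_eq_integral_toReal_smul hp.ennreal_ofReal
          (.of_forall fun _ => ENNReal.ofReal_lt_top)]
    _ = ∫ ω, (ENNReal.ofReal (p (Y ω))).toReal • (p (Y ω))⁻¹ • f (Y ω) ∂μ :=
        integral_map hY (hp.ennreal_ofReal.ennreal_toReal.aestronglyMeasurable.smul hweighted)
    _ = ∫ ω, f (Y ω) ∂μ := by
        refine integral_congr_ae (hpos.mono fun ω hω => ?_)
        simp only [ENNReal.toReal_ofReal hω.le, smul_inv_smul₀ hω.ne']

theorem integral_importanceWeight_mul [DecidableEq α] {A : Ω → α} {a : α} {π : α → E → ℝ}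
    (h : IsPropensityScore μ (A ⁻¹' {a}) Y (π a)) (hA : MeasurableSet (A ⁻¹' {a}))
    (hY : AEMeasurable Y μ) (hπ : Measurable (π a)) (hpos : ∀ᵐ ω ∂μ, 0 < π a (Y ω))
    {f : E → ℝ} (hf : AEStronglyMeasurable f (μ.map Y)) (w : α → ℝ) :
    ∫ ω, w (A ω) / π (A ω) (Y ω) * (if A ω = a then (1 : ℝ) else 0) * f (Y ω) ∂μ
      = w a * ∫ ω, f (Y ω) ∂μ := by
  rw [← h.setIntegral_inv_smul hY hπ hpos hf, ← integral_indicator hA, ← integral_const_mul]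
  congr 1 with ω
  by_cases hω : A ω = a
  · simp [hω, div_eq_mul_inv, mul_assoc]
  · simp [hω]

end IsPropensityScore

end Propensity

theorem stmt11_general {ι α Ω : Type*} [Fintype ι] [Fintype α] [DecidableEq α]
    [MeasurableSpace α] [MeasurableSingletonClass α] [MeasurableSpace Ω] (μ : Measure Ω)
    [IsProbabilityMeasure μ] (x : EuclideanSpace ℝ ι) (Sige : Matrix ι ι ℝ)
    (ε : Ω → EuclideanSpace ℝ ι) (hmeasε : Measurable ε) (hε : MemLp ε 2 μ)
    (hmean : ∀ i, ∫ ω, ε ω i ∂μ = 0)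
    (hcov : ∀ i j, ∫ ω, ε ω i * ε ω j ∂μ = Sige i j)
    (π : α → EuclideanSpace ℝ ι → ℝ) (hπmeas : ∀ a, Measurable (π a))
    (hπ : ∀ v, (π · v) ∈ stdSimplex ℝ α) (hπpos : ∀ a, ∀ᵐ ω ∂μ, 0 < π a (x + ε ω))
    (A : Ω → α) (hmeasA : Measurable A)
    (hcond : ∀ (a : α) (g : EuclideanSpace ℝ ι → ℝ), Measurable g →
      Integrable (fun ω => g (ε ω)) μ →
      ∫ ω, (if A ω = a then (1 : ℝ) else 0) * g (ε ω) ∂μ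
        = ∫ ω, π a (x + ε ω) * g (ε ω) ∂μ)
    (πnd : α → ℝ) (a : α) (i j : ι) :
    ∫ ω, (πnd (A ω) / π (A ω) (x + ε ω)) * (if A ω = a then (1 : ℝ) else 0) *
        ((x + ε ω) i * (x + ε ω) j) ∂μ
      = πnd a * (x i * x j + Sige i j) := by
  have hA : MeasurableSet (A ⁻¹' {a}) := hmeasA (measurableSet_singleton a)
  have hcontext : Measurable fun ω => x + ε ω := hmeasε.const_add x
  have hpropensity : IsPropensityScore μ (A ⁻¹' {a}) (fun ω => x + ε ω) (π a) :=
    isPropensityScore_of_integral_ite_mul_eq hA hcontext (hπmeas a) hπ fun g hg =>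
      hcond a (fun e => g (x + e)) (hg.comp (measurable_const_add x))
  have hcoord : Measurable fun v : EuclideanSpace ℝ ι => v i * v j := by fun_prop
  calc
    _ = πnd a * ∫ ω, (x + ε ω) i * (x + ε ω) j ∂μ :=
      hpropensity.integral_importanceWeight_mul hA hcontext.aemeasurable (hπmeas a) (hπpos a)
        hcoord.aestronglyMeasurable πnd
    _ = πnd a * (x i * x j + Sige i j) := by
      rw [← hcov i j, ← integral_const_add_mul_const_add_of_integral_eq_zero (hε.eval_piLp i)
        (hε.eval_piLp j) (hmean i) (hmean j)]
      simp only [PiLp.add_apply]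

theorem stmt11 (d : ℕ) (hd : 1 ≤ d)
    {Ω : Type*} [MeasurableSpace Ω] (μ : Measure Ω) [IsProbabilityMeasure μ]
    (x : EuclideanSpace ℝ (Fin d))
    (Sige : Matrix (Fin d) (Fin d) ℝ) (hSige : Sige.PosSemidef)
    (ε : Ω → EuclideanSpace ℝ (Fin d)) (hmeasε : Measurable ε)
    (hmean : ∀ i, ∫ ω, ε ω i ∂μ = 0)
    (hcov : ∀ i j, ∫ ω, ε ω i * ε ω j ∂μ = Sige i j)
    (hbdd : ∀ᵐ ω ∂μ, ‖x + ε ω‖ ≤ 1)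
    (q : ℝ) (hq : q ∈ Set.Ioc (0:ℝ) 1)
    (π : Fin 2 → EuclideanSpace ℝ (Fin d) → ℝ)
    (hπmeas : ∀ a, Measurable (π a))
    (hπsum : ∀ v, π 0 v + π 1 v = 1)
    (hπq : ∀ a v, q ≤ π a v)
    (A : Ω → Fin 2) (hmeasA : Measurable A)
    (hcond : ∀ (a : Fin 2) (g : EuclideanSpace ℝ (Fin d) → ℝ), Measurable g →
      Integrable (fun ω => g (ε ω)) μ →
      ∫ ω, (if A ω = a then (1:ℝ) else 0) * g (ε ω) ∂μ
        = ∫ ω, π a (x + ε ω) * g (ε ω) ∂μ)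
    (πnd : Fin 2 → ℝ) (hπnd0 : ∀ a, 0 ≤ πnd a) (hπnd : πnd 0 + πnd 1 = 1) :
    ∀ (a : Fin 2) (i j : Fin d),
      ∫ ω, (πnd (A ω) / π (A ω) (x + ε ω)) * (if A ω = a then (1:ℝ) else 0) *
          ((x + ε ω) i * (x + ε ω) j) ∂μ
        = πnd a * (x i * x j + Sige i j) := by
  have hπpos (a v) : 0 < π a v := hq.1.trans_le (hπq a v)
  exact stmt11_general μ x Sige ε hmeasε
    (memLp_of_ae_norm_const_add_le hmeasε.aestronglyMeasurable hbdd 2) hmean hcov π hπmeas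
    (fun v => ⟨fun a => (hπpos a v).le, (Fin.sum_univ_two _).trans (hπsum v)⟩)
    (fun a => .of_forall fun _ => hπpos a _) A hmeasA hcond πnd
end

section
/- Let d ≥ 1, x ∈ ℝ^d, θ*_0, θ*_1 ∈ ℝ^d, and let Σ_e be a d×d positive semidefinite matrix. Let ε be a random vector in ℝ^d with E[ε] = 0 and E[ε εᵀ] = Σ_e, set x̃ := x + ε, and assume ‖x̃‖₂ ≤ 1 almost surely. Let q ∈ (0,1] and let π(·|·) be a measurable map with π(0|v) + π(1|v) = 1 and π(a'|v) ≥ q for all v ∈ ℝ^d, a' ∈ {0,1}. Let A be a {0,1}-valued random variable whose conditional distribution given ε satisfies P(A = a' | ε) = π(a' | x̃). Let η be a bounded real random variable with E[η | ε, A] = 0 and set r := ⟨θ*_A, x⟩ + η. Fix numbers π^{nd}(0), π^{nd}(1) ≥ 0 with π^{nd}(0) + π^{nd}(1) = 1. Then for each a ∈ {0,1}: E[(π^{nd}(A)/π(A | x̃)) · 1{A = a} · x̃ · r] = π^{nd}(a) · (x xᵀ) · θ*_a. -/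
open MeasureTheory RealInnerProductSpace

/-! On the event `A = a`, the observation `X` has density `p a` relative to its unconditional law,
so weighting by `1 / p a` there restores that law: this removes the dependence of the action on the
measurement error. The reward noise contributes nothing because the weighted feature is a
function of `(X, A)`, given which the noise has conditional mean zero. What is left is the mean
reward `⟪x, θ a⟫` times the mean of the observed context, which is `x` as the error is centred. -/

section Conditioning

variable {Ω E α : Type*} [MeasurableSpace Ω] [MeasurableSpace E]

/-- The propensities `P(A = a | X) = p a X` of an action `A` given an observation `X`, encoded by
testing against the integrable functions of `X`. -/
def HasPropensity [DecidableEq α] (μ : Measure Ω) (A : Ω → α) (X : Ω → E)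
    (p : α → E → ℝ) : Prop :=
  ∀ (a : α) (g : E → ℝ), Measurable g → Integrable (fun ω => g (X ω)) μ →
    ∫ ω, (if A ω = a then (1 : ℝ) else 0) * g (X ω) ∂μ = ∫ ω, p a (X ω) * g (X ω) ∂μ

/-- The condition `E[η | Z] = 0` on a noise variable `η`, encoded by testing against the bounded
measurable functions of `Z`. -/
def HasZeroCondMean (μ : Measure Ω) (η : Ω → ℝ) (Z : Ω → E) : Prop :=
  ∀ g : E → ℝ, Measurable g → (∃ C : ℝ, ∀ z, |g z| ≤ C) → ∫ ω, η ω * g (Z ω) ∂μ = 0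

namespace HasZeroCondMean

variable {μ : Measure Ω} [IsFiniteMeasure μ] {η : Ω → ℝ} {Z : Ω → E}

theorem condExp_ae_eq_zero (h : HasZeroCondMean μ η Z) (hη : Integrable η μ)
    (hZ : Measurable Z) : μ[η | MeasurableSpace.comap Z inferInstance] =ᵐ[μ] 0 := by
  refine (ae_eq_condExp_of_forall_setIntegral_eq hZ.comap_le hη
    (fun _ _ _ => integrableOn_zero) ?_ aestronglyMeasurable_zero).symm
  rintro _ ⟨t, ht, rfl⟩ -
  have htest := h (t.indicator 1) (measurable_one.indicator ht)
    ⟨1, fun z => by by_cases hz : z ∈ t <;> simp [hz]⟩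
  have hind : (fun ω => η ω * t.indicator 1 (Z ω)) = (Z ⁻¹' t).indicator η := by
    ext ω
    by_cases hω : Z ω ∈ t <;> simp [hω]
  rw [hind, integral_indicator (hZ ht)] at htest
  simp [htest]

theorem integral_mul_eq_zero (h : HasZeroCondMean μ η Z) (hη : Integrable η μ)
    (hZ : Measurable Z) {g : E → ℝ} (hg : Measurable g)
    (hint : Integrable (fun ω => g (Z ω) * η ω) μ) : ∫ ω, g (Z ω) * η ω ∂μ = 0 := by
  have hgZ : AEStronglyMeasurable[MeasurableSpace.comap Z inferInstance] (g ∘ Z) μ :=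
    (hg.comp (comap_measurable Z)).aestronglyMeasurable
  have hpull := condExp_mul_of_aestronglyMeasurable_left hgZ hint hη
  rw [← integral_condExp hZ.comap_le]
  refine integral_eq_zero_of_ae ?_
  filter_upwards [hpull, h.condExp_ae_eq_zero hη hZ] with ω hω hzero
  exact hω.trans (by simp [hzero])

theorem setIntegral_mul_eq_zero [MeasurableSpace α] [MeasurableSingletonClass α]
    {A : Ω → α} {X : Ω → E} {a : α} (h : HasZeroCondMean μ η fun ω => (X ω, A ω))
    (hη : Integrable η μ) (hA : Measurable A) (hX : Measurable X) {g : E → ℝ} (hg : Measurable g)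
    (hint : IntegrableOn (fun ω => g (X ω) * η ω) (A ⁻¹' {a}) μ) :
    ∫ ω in A ⁻¹' {a}, g (X ω) * η ω ∂μ = 0 := by
  have hAa : MeasurableSet (A ⁻¹' {a}) := hA (measurableSet_singleton a)
  let G : E × α → ℝ := (Prod.snd ⁻¹' {a}).indicator fun z => g z.1
  have hG : Measurable G :=
    (hg.comp measurable_fst).indicator (measurable_snd (measurableSet_singleton a))
  have hind : (A ⁻¹' {a}).indicator (fun ω => g (X ω) * η ω) =
      fun ω => G (X ω, A ω) * η ω := by
    ext ω
    by_cases hAω : A ω = a <;> simp [G, hAω]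
  rw [← integrable_indicator_iff hAa, hind] at hint
  rw [← integral_indicator hAa, hind]
  exact h.integral_mul_eq_zero hη (hX.prodMk hA) hG hint

end HasZeroCondMean

variable [DecidableEq α] [MeasurableSpace α] [MeasurableSingletonClass α]
  {μ : Measure Ω} [IsFiniteMeasure μ] {A : Ω → α} {X : Ω → E} {p : α → E → ℝ} {a : α}

namespace HasPropensity

theorem measureReal_inter_preimage (h : HasPropensity μ A X p) (hA : Measurable A)
    (hX : Measurable X) {s : Set E} (hs : MeasurableSet s) :
    μ.real (X ⁻¹' s ∩ A ⁻¹' {a}) = ∫ ω in X ⁻¹' s, p a (X ω) ∂μ := by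
  have htest := h a (s.indicator 1) (measurable_one.indicator hs)
    ((integrable_const 1).indicator (hX hs))
  have hleft : (fun ω => (if A ω = a then (1 : ℝ) else 0) * s.indicator 1 (X ω)) =
      (X ⁻¹' s ∩ A ⁻¹' {a}).indicator 1 := by
    ext ω
    by_cases hω : X ω ∈ s <;> by_cases hAω : A ω = a <;> simp [hω, hAω]
  have hright : (fun ω => p a (X ω) * s.indicator 1 (X ω)) =
      (X ⁻¹' s).indicator fun ω => p a (X ω) := by
    ext ω
    by_cases hω : X ω ∈ s <;> simp [hω]
  rwa [hleft, hright, integral_indicator_one ((hX hs).inter (hA (measurableSet_singleton a))),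
    integral_indicator (hX hs)] at htest

theorem map_restrict_eq_withDensity (h : HasPropensity μ A X p) (hA : Measurable A)
    (hX : Measurable X) (hp : Measurable (p a)) (hp0 : ∀ v, 0 ≤ p a v)
    (hpint : Integrable (fun ω => p a (X ω)) μ) :
    (μ.restrict (A ⁻¹' {a})).map X =
      (μ.map X).withDensity fun v => ENNReal.ofReal (p a v) := by
  ext s hs
  rw [Measure.map_apply hX hs, Measure.restrict_apply (hX hs), withDensity_apply _ hs,
    setLIntegral_map hs hp.ennreal_ofReal hX,
    ← ofReal_integral_eq_lintegral_ofReal hpint.integrableOn (.of_forall fun ω => hp0 (X ω)),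
    ← h.measureReal_inter_preimage hA hX hs, ofReal_measureReal]

variable {f : E → ℝ}

theorem integrableOn_div (h : HasPropensity μ A X p) (hA : Measurable A)
    (hX : Measurable X) (hp : Measurable (p a)) (hp0 : ∀ v, 0 < p a v)
    (hpint : Integrable (fun ω => p a (X ω)) μ) (hf : Measurable f)
    (hfint : Integrable (fun ω => f (X ω)) μ) :
    IntegrableOn (fun ω => f (X ω) / p a (X ω)) (A ⁻¹' {a}) μ := by
  refine Integrable.comp_measurable (g := fun v => f v / p a v) ?_ hX
  rw [h.map_restrict_eq_withDensity hA hX hp (fun v => (hp0 v).le) hpint,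
    integrable_withDensity_iff hp.ennreal_ofReal (by simp)]
  simp only [ENNReal.toReal_ofReal (hp0 _).le, div_mul_cancel₀ _ (hp0 _).ne']
  exact (integrable_map_measure hf.aestronglyMeasurable hX.aemeasurable).2 hfint

theorem setIntegral_div (h : HasPropensity μ A X p) (hA : Measurable A)
    (hX : Measurable X) (hp : Measurable (p a)) (hp0 : ∀ v, 0 < p a v)
    (hpint : Integrable (fun ω => p a (X ω)) μ) (hf : Measurable f) :
    ∫ ω in A ⁻¹' {a}, f (X ω) / p a (X ω) ∂μ = ∫ ω, f (X ω) ∂μ := calc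
  _ = ∫ v, f v / p a v ∂(μ.restrict (A ⁻¹' {a})).map X :=
    (integral_map hX.aemeasurable (hf.div hp).aestronglyMeasurable).symm
  _ = ∫ v, f v ∂μ.map X := by
    rw [h.map_restrict_eq_withDensity hA hX hp (fun v => (hp0 v).le) hpint,
      integral_withDensity_eq_integral_toReal_smul hp.ennreal_ofReal (by simp)]
    simp only [ENNReal.toReal_ofReal (hp0 _).le, smul_eq_mul, mul_div_cancel₀ _ (hp0 _).ne']
  _ = ∫ ω, f (X ω) ∂μ := integral_map hX.aemeasurable hf.aestronglyMeasurable

end HasPropensity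

theorem HasPropensity.integral_weight_mul_reward (h : HasPropensity μ A X p)
    (hA : Measurable A) (hX : Measurable X) (hp : Measurable (p a)) (hp0 : ∀ v, 0 < p a v)
    (hpint : Integrable (fun ω => p a (X ω)) μ) {η : Ω → ℝ} (hη : Measurable η) {B : ℝ}
    (hηB : ∀ᵐ ω ∂μ, |η ω| ≤ B) (hη0 : HasZeroCondMean μ η fun ω => (X ω, A ω)) (m ν : α → ℝ)
    {f : E → ℝ} (hf : Measurable f) (hfint : Integrable (fun ω => f (X ω)) μ) :
    ∫ ω, ν (A ω) / p (A ω) (X ω) * (if A ω = a then (1 : ℝ) else 0) *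
        (f (X ω) * (m (A ω) + η ω)) ∂μ = ν a * ((∫ ω, f (X ω) ∂μ) * m a) := by
  let g : E → ℝ := fun v => f v / p a v
  have hg : Measurable g := hf.div hp
  have hgint : IntegrableOn (fun ω => g (X ω)) (A ⁻¹' {a}) μ :=
    h.integrableOn_div hA hX hp hp0 hpint hf hfint
  have hgη : IntegrableOn (fun ω => g (X ω) * η ω) (A ⁻¹' {a}) μ :=
    hgint.mul_bdd hη.aestronglyMeasurable (ae_restrict_of_ae hηB)
  have hsplit : ∀ ω, ν (A ω) / p (A ω) (X ω) * (if A ω = a then (1 : ℝ) else 0) *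
      (f (X ω) * (m (A ω) + η ω)) =
        (A ⁻¹' {a}).indicator (fun ω => ν a * (g (X ω) * m a + g (X ω) * η ω)) ω := by
    intro ω
    by_cases hAω : A ω = a
    · simp only [hAω, if_true, Set.indicator_of_mem (show ω ∈ A ⁻¹' {a} from hAω), g]
      ring
    · simp [hAω]
  calc
    _ = ∫ ω in A ⁻¹' {a}, ν a * (g (X ω) * m a + g (X ω) * η ω) ∂μ := by
      simp only [hsplit, integral_indicator (hA (measurableSet_singleton a))]
    _ = ν a * ((∫ ω in A ⁻¹' {a}, g (X ω) ∂μ) * m a +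
          ∫ ω in A ⁻¹' {a}, g (X ω) * η ω ∂μ) := by
      rw [integral_const_mul, integral_add (hgint.mul_const _) hgη, integral_mul_const]
    _ = ν a * ((∫ ω, f (X ω) ∂μ) * m a) := by
      rw [h.setIntegral_div hA hX hp hp0 hpint hf,
        hη0.setIntegral_mul_eq_zero (.of_bound hη.aestronglyMeasurable B hηB) hA hX hg hgη,
        add_zero]

end Conditioning

theorem integrable_apply_of_ae_norm_const_add_le {Ω V : Type*} [MeasurableSpace Ω]
    {μ : Measure Ω} [IsFiniteMeasure μ] [SeminormedAddCommGroup V] [NormedSpace ℝ V]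
    [MeasurableSpace V] [OpensMeasurableSpace V] {x : V} {ε : Ω → V} (hε : Measurable ε) {C : ℝ}
    (hbdd : ∀ᵐ ω ∂μ, ‖x + ε ω‖ ≤ C) (L : V →L[ℝ] ℝ) : Integrable (fun ω => L (ε ω)) μ := by
  refine .of_bound (L.measurable.comp hε).aestronglyMeasurable (‖L‖ * (C + ‖x‖)) ?_
  filter_upwards [hbdd] with ω hω
  have hεω : ‖ε ω‖ ≤ C + ‖x‖ := by
    simpa using (norm_sub_le (x + ε ω) x).trans (add_le_add_left hω ‖x‖)
  exact L.le_opNorm_of_le hεω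

theorem mem_Ioc_zero_one_of_sum_eq_one {ι : Type*} [Fintype ι] {p : ι → ℝ}
    (hsum : ∑ i, p i = 1) (hpos : ∀ i, 0 < p i) (i : ι) : p i ∈ Set.Ioc (0 : ℝ) 1 :=
  ⟨hpos i, hsum ▸ Finset.single_le_sum (fun j _ => (hpos j).le) (Finset.mem_univ i)⟩

theorem stmt12_general {Ω V α : Type*} [MeasurableSpace Ω] (μ : Measure Ω)
    [IsProbabilityMeasure μ] [NormedAddCommGroup V] [InnerProductSpace ℝ V]
    [MeasurableSpace V] [BorelSpace V] [DecidableEq α] [MeasurableSpace α]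
    [MeasurableSingletonClass α] (x : V) (θs : α → V)
    (ε : Ω → V) (hmeasε : Measurable ε) (L : V →L[ℝ] ℝ)
    (hLint : Integrable (fun ω => L (ε ω)) μ) (hLmean : ∫ ω, L (ε ω) ∂μ = 0)
    (a : α) (π : α → V → ℝ) (hπmeas : Measurable (π a))
    (hπ : ∀ v, π a v ∈ Set.Ioc (0 : ℝ) 1)
    (A : Ω → α) (hmeasA : Measurable A) (hcond : HasPropensity μ A ε fun b v => π b (x + v))
    (η : Ω → ℝ) (hmeasη : Measurable η) (Bη : ℝ) (hηbdd : ∀ᵐ ω ∂μ, |η ω| ≤ Bη)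
    (hηcond : HasZeroCondMean μ η fun ω => (ε ω, A ω))
    (r : Ω → ℝ) (hr : ∀ ω, r ω = ⟪θs (A ω), x⟫ + η ω) (πnd : α → ℝ) :
    ∫ ω, πnd (A ω) / π (A ω) (x + ε ω) * (if A ω = a then (1 : ℝ) else 0) *
        (L (x + ε ω) * r ω) ∂μ = πnd a * (L x * ⟪x, θs a⟫) := by
  have hπx : Measurable fun v => π a (x + v) := hπmeas.comp (measurable_const_add x)
  have hπint : Integrable (fun ω => π a (x + ε ω)) μ :=
    .of_bound (hπx.comp hmeasε).aestronglyMeasurable 1 (.of_forall fun ω => by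
      rw [Real.norm_of_nonneg (hπ _).1.le]
      exact (hπ _).2)
  have hLx : Measurable fun v => L (x + v) := L.measurable.comp (measurable_const_add x)
  have hLxint : Integrable (fun ω => L (x + ε ω)) μ := by
    simp only [map_add]
    exact (integrable_const (L x)).add hLint
  have hLxmean : ∫ ω, L (x + ε ω) ∂μ = L x := by
    simp only [map_add, integral_add (integrable_const _) hLint, hLmean, integral_const,
      probReal_univ, one_smul, add_zero]
  have hipw := hcond.integral_weight_mul_reward hmeasA hmeasε hπx (fun v => (hπ _).1) hπint
    hmeasη hηbdd hηcond (fun b => ⟪θs b, x⟫) πnd hLx hLxint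
  simpa only [hr, hLxmean, real_inner_comm x (θs a)] using hipw

theorem stmt12 (d : ℕ) (hd : 1 ≤ d)
    {Ω : Type*} [MeasurableSpace Ω] (μ : Measure Ω) [IsProbabilityMeasure μ]
    (x : EuclideanSpace ℝ (Fin d))
    (θs : Fin 2 → EuclideanSpace ℝ (Fin d))
    (Sige : Matrix (Fin d) (Fin d) ℝ) (hSige : Sige.PosSemidef)
    (ε : Ω → EuclideanSpace ℝ (Fin d)) (hmeasε : Measurable ε)
    (hmean : ∀ i, ∫ ω, ε ω i ∂μ = 0)
    (hcov : ∀ i j, ∫ ω, ε ω i * ε ω j ∂μ = Sige i j)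
    (hbdd : ∀ᵐ ω ∂μ, ‖x + ε ω‖ ≤ 1)
    (q : ℝ) (hq : q ∈ Set.Ioc (0:ℝ) 1)
    (π : Fin 2 → EuclideanSpace ℝ (Fin d) → ℝ)
    (hπmeas : ∀ a, Measurable (π a))
    (hπsum : ∀ v, π 0 v + π 1 v = 1)
    (hπq : ∀ a v, q ≤ π a v)
    (A : Ω → Fin 2) (hmeasA : Measurable A)
    (hcond : ∀ (a : Fin 2) (g : EuclideanSpace ℝ (Fin d) → ℝ), Measurable g →
      Integrable (fun ω => g (ε ω)) μ →
      ∫ ω, (if A ω = a then (1:ℝ) else 0) * g (ε ω) ∂μ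
        = ∫ ω, π a (x + ε ω) * g (ε ω) ∂μ)
    (η : Ω → ℝ) (hmeasη : Measurable η)
    (Bη : ℝ) (hηbdd : ∀ ω, |η ω| ≤ Bη)
    (hηcond : ∀ g : EuclideanSpace ℝ (Fin d) × Fin 2 → ℝ, Measurable g →
      (∃ Cg : ℝ, ∀ p, |g p| ≤ Cg) →
      ∫ ω, η ω * g (ε ω, A ω) ∂μ = 0)
    (r : Ω → ℝ) (hr : ∀ ω, r ω = ⟪θs (A ω), x⟫ + η ω)
    (πnd : Fin 2 → ℝ) (hπnd0 : ∀ a, 0 ≤ πnd a) (hπnd : πnd 0 + πnd 1 = 1) :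
    ∀ (a : Fin 2) (i : Fin d),
      ∫ ω, (πnd (A ω) / π (A ω) (x + ε ω)) * (if A ω = a then (1:ℝ) else 0) *
          ((x + ε ω) i * r ω) ∂μ
        = πnd a * (x i * ⟪x, θs a⟫) := by
  intro a i
  have hπ : ∀ v, π a v ∈ Set.Ioc (0 : ℝ) 1 := fun v => mem_Ioc_zero_one_of_sum_eq_one
    (p := (π · v)) (by rw [Fin.sum_univ_two, hπsum]) (fun b => hq.1.trans_le (hπq b v)) a
  exact stmt12_general μ x θs ε hmeasε (EuclideanSpace.proj i)
    (integrable_apply_of_ae_norm_const_add_le hmeasε hbdd _) (hmean i) a π (hπmeas a) hπ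
    A hmeasA hcond η hmeasη Bη (.of_forall hηbdd) hηcond r hr πnd
end
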